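/- For every ε > 0 there exists a constant C_ε > 0 such that for every integer k ≥ 1 and every β ∈ ℂ with dist(β, −ℕ₀) ≥ ε, one has |Γ(β)Γ(k)/Γ(β+k)| ≤ C_ε · 2^k. -/

import Mathlib

/-- The set of nonpositive integers `−ℕ₀ = {0, −1, −2, …}` in `ℂ`. -/
def negNat0 : Set ℂ := {w : ℂ | ∃ m : ℕ, w = -(m : ℂ)}

/-- The recurrence `B(s, k + 1) = B(s, k) - B(s + 1, k)` for the quotient of Gamma values. -/
theorem Gamma_mul_Gamma_div_Gamma_add_succ {s : ℂ} (hs : ∀ m : ℕ, s ≠ -m) {k : ℕ} (hk : k ≠ 0) :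
    Complex.Gamma s * Complex.Gamma ((k + 1 : ℕ) : ℂ) / Complex.Gamma (s + (k + 1 : ℕ)) =
      Complex.Gamma s * Complex.Gamma k / Complex.Gamma (s + k) -
        Complex.Gamma (s + 1) * Complex.Gamma k / Complex.Gamma (s + 1 + k) := by
  have hk' : (k : ℂ) ≠ 0 := Nat.cast_ne_zero.mpr hk
  have hs0 : s ≠ 0 := by simpa using hs 0
  have hsk : s + k ≠ 0 := fun h => hs k (eq_neg_of_add_eq_zero_left h)
  have hΓ : Complex.Gamma (s + k) ≠ 0 := Complex.Gamma_ne_zero fun m h =>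
    hs (m + k) (by push_cast; linear_combination h)
  rw [show s + ((k + 1 : ℕ) : ℂ) = s + k + 1 by push_cast; ring,
    show s + 1 + (k : ℂ) = s + k + 1 by ring, Nat.cast_succ,
    Complex.Gamma_add_one _ hsk, Complex.Gamma_add_one _ hk', Complex.Gamma_add_one _ hs0]
  field_simp
  ring

theorem norm_Gamma_mul_Gamma_div_Gamma_add_le {ε : ℝ} (hε : 0 < ε) (n : ℕ) {s : ℂ}
    (hs : ∀ m : ℕ, ε ≤ ‖s + m‖) :
    ‖Complex.Gamma s * Complex.Gamma ((n + 1 : ℕ) : ℂ) / Complex.Gamma (s + (n + 1 : ℕ))‖ ≤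
      ε⁻¹ * 2 ^ n := by
  have hne {s : ℂ} (hs : ∀ m : ℕ, ε ≤ ‖s + m‖) (m : ℕ) : s ≠ -m := by
    rintro rfl
    have := hs m
    simp at this
    linarith
  induction n generalizing s with
  | zero =>
    have hs0 : s ≠ 0 := by simpa using hne hs 0
    have hΓ : Complex.Gamma s ≠ 0 := Complex.Gamma_ne_zero (hne hs)
    have hnorm : ε ≤ ‖s‖ := by simpa using hs 0
    have : Complex.Gamma s * Complex.Gamma ((0 + 1 : ℕ) : ℂ) / Complex.Gamma (s + (0 + 1 : ℕ)) =
        s⁻¹ := by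
      simp only [zero_add, Nat.cast_one, Complex.Gamma_one, Complex.Gamma_add_one _ hs0]
      field_simp
    rw [this, norm_inv, pow_zero, mul_one]
    gcongr
  | succ n ih =>
    have hs' (m : ℕ) : ε ≤ ‖s + 1 + m‖ := by
      simpa [add_assoc, add_comm (1 : ℂ)] using hs (m + 1)
    rw [Gamma_mul_Gamma_div_Gamma_add_succ (hne hs) n.succ_ne_zero]
    calc _ ≤ ε⁻¹ * 2 ^ n + ε⁻¹ * 2 ^ n := norm_sub_le_of_le (ih hs) (ih hs')
      _ = ε⁻¹ * 2 ^ (n + 1) := by ring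

theorem stmt_5 (ε : ℝ) (hε : 0 < ε) :
    ∃ C : ℝ, 0 < C ∧ ∀ k : ℕ, 1 ≤ k → ∀ β : ℂ,
      ε ≤ Metric.infDist β negNat0 →
      ‖Complex.Gamma β * Complex.Gamma (k : ℂ) / Complex.Gamma (β + k)‖ ≤ C * 2 ^ k := by
  refine ⟨ε⁻¹, inv_pos.mpr hε, fun k hk β hβ => ?_⟩
  obtain ⟨n, rfl⟩ := Nat.exists_eq_add_of_le' hk
  have hdist (m : ℕ) : ε ≤ ‖β + m‖ := by
    have hmem : -(m : ℂ) ∈ negNat0 := ⟨m, rfl⟩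
    simpa [dist_eq_norm] using hβ.trans (Metric.infDist_le_dist_of_mem hmem)
  refine (norm_Gamma_mul_Gamma_div_Gamma_add_le hε n hdist).trans ?_
  gcongr
  · norm_num
  · exact n.le_succ
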